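/- Let (η, α, U, A, φ, σ) be a solution of the Gowdy symmetric IIA system on (T₋,T₊) with 0 < T₋ < t_i < T₊ < ∞, and set γ := η + (1/2)ln α. Assume there is a constant λ̄ with |λ| ≤ λ̄ < 1/2 and that the timelike convergence condition φ̇² + e^{2λφ}σ̇² ≥ (1/2)αQ²e^{2(η+λφ−U)} holds at every point; since Q ≠ 0 and the data at t = t_i are regular, this forces Ẽ(t_i) > 0. Then there is a constant C such that for all t ∈ (T₋,t_i] and all θ ∈ S¹, ∫_t^{t_i} s·e^{2(γ+λφ−U)(s,θ)} ds ≤ C, and consequently γ is bounded from above on (T₋,t_i] × S¹. -/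

import Mathlib

/-!
Write `V = α Q² e^{2(η + λφ - U)} = Q² e^{2(γ + λφ - U)}`. The equation for `α` reads
`∂ₜ log α = -t V`, so the integral to be bounded is `(log α(t) - log α(tᵢ)) / Q²`
(`integral_eq`). The Hamiltonian constraint gives `∂ₜγ = t (𝓔 - V / 4)`, and the timelike
convergence condition gives `𝓔 ≥ V / 8`, so an upper bound for `log α(t) - log α(tᵢ)` also bounds
`γ` from above (`γ_le`).

The bound on `log α` comes from the two energies.

* The full energy satisfies `dE/dt = -(2/t) ∫ K / √α` with `0 ≤ K ≤ 𝓔`, so `t² E` is nondecreasing;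
  hence `E`, and with it `Ẽ ≤ E`, stays bounded to the past as `t > T₋ > 0` (`Efull_mono`, `Et_le`).
* The momentum constraint gives `|γ'| ≤ t 𝓔 / √α`, and `|U'|`, `|λφ'|` are bounded by
  `1 / √α` and `𝓔 / √α`. As `α` decreases in time, `∫ 1 / √α` is bounded to the past. So
  `γ + λφ - U` has uniformly bounded oscillation over the circle, and the values of `V` at two
  points of the same circle are comparable (`g_osc`).
* One has `dẼ/dt = -∫ [(V/2)(t 𝓔 - U̇ + λφ̇) + (2/t) K] / √α`. Completing squares and using
  `K ≥ V / 8` and `|λ| < 1/2`, the bracket is at least `(1/4 - λ²) t V 𝓔` (`dissipation_ge`). Thus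
  `Ẽ` decreases in time, `Ẽ ≥ Ẽ(tᵢ) > 0` to the past, and by comparability of `V` on circles
  `-dẼ/dt ≥ κ t V(t, θ) = -κ ∂ₜ log α(t, θ)` for every `θ`, with a uniform `κ > 0`. Integrating, the
  bound on `Ẽ` bounds `log α(t, θ) - log α(tᵢ, θ)` (`logα_bound`).
-/

noncomputable section

open Real Set MeasureTheory Filter

/-- Partial derivative in the first (time) variable. -/
def pt (f : ℝ → ℝ → ℝ) : ℝ → ℝ → ℝ := fun t θ => deriv (fun s => f s θ) t

/-- Partial derivative in the second (angle) variable. -/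
def pth (f : ℝ → ℝ → ℝ) : ℝ → ℝ → ℝ := fun t θ => deriv (fun x => f t x) θ

/-- The full Gowdy symmetric IIA system (both constraints, the equation for `α`,
and the four evolution equations) holding at all times in `S` (dot = `pt`,
prime = `pth`). -/
structure IsGowdyIIA (Q lam : ℝ) (S : Set ℝ) (η α U A φ σ : ℝ → ℝ → ℝ) : Prop where
  alpha_pos : ∀ t ∈ S, ∀ θ : ℝ, 0 < α t θ
  constraint_t : ∀ t ∈ S, ∀ θ : ℝ,
    pt η t θ / t =
      (pt U t θ) ^ 2 + α t θ * (pth U t θ) ^ 2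
      + exp (4 * U t θ) / (4 * t ^ 2) * ((pt A t θ) ^ 2 + α t θ * (pth A t θ) ^ 2)
      + (1 / 4) * ((pt φ t θ) ^ 2 + α t θ * (pth φ t θ) ^ 2
          + exp (2 * lam * φ t θ) * ((pt σ t θ) ^ 2 + α t θ * (pth σ t θ) ^ 2)
          + α t θ * Q ^ 2 * exp (2 * lam * φ t θ + 2 * (η t θ - U t θ)))
  constraint_θ : ∀ t ∈ S, ∀ θ : ℝ,
    pth η t θ / t =
      2 * pt U t θ * pth U t θ
      + exp (4 * U t θ) / (2 * t ^ 2) * (pt A t θ * pth A t θ)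
      - pth α t θ / (2 * t * α t θ)
      + (1 / 2) * (pt φ t θ * pth φ t θ
          + exp (2 * lam * φ t θ) * (pt σ t θ * pth σ t θ))
  constraint_α : ∀ t ∈ S, ∀ θ : ℝ,
    pt α t θ = - t * (α t θ) ^ 2 * Q ^ 2 * exp (2 * lam * φ t θ + 2 * (η t θ - U t θ))
  evol_U : ∀ t ∈ S, ∀ θ : ℝ,
    pt (pt U) t θ - α t θ * pth (pth U) t θ =
      - pt U t θ / t + pt α t θ * pt U t θ / (2 * α t θ) + pth α t θ * pth U t θ / 2
      + exp (4 * U t θ) / (2 * t ^ 2) * ((pt A t θ) ^ 2 - α t θ * (pth A t θ) ^ 2)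
      + (1 / 4) * α t θ * Q ^ 2 * exp (2 * lam * φ t θ + 2 * (η t θ - U t θ))
  evol_A : ∀ t ∈ S, ∀ θ : ℝ,
    pt (pt A) t θ - α t θ * pth (pth A) t θ =
      pt A t θ / t + pt α t θ * pt A t θ / (2 * α t θ) + pth α t θ * pth A t θ / 2
      - 4 * (pt A t θ * pt U t θ - α t θ * pth A t θ * pth U t θ)
  evol_φ : ∀ t ∈ S, ∀ θ : ℝ,
    pt (pt φ) t θ - α t θ * pth (pth φ) t θ =
      - pt φ t θ / t + pt α t θ * pt φ t θ / (2 * α t θ) + pth α t θ * pth φ t θ / 2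
      + lam * exp (2 * lam * φ t θ) * ((pt σ t θ) ^ 2 - α t θ * (pth σ t θ) ^ 2)
      - lam * α t θ * Q ^ 2 * exp (2 * lam * φ t θ + 2 * (η t θ - U t θ))
  evol_σ : ∀ t ∈ S, ∀ θ : ℝ,
    pt (pt σ) t θ - α t θ * pth (pth σ) t θ =
      - pt σ t θ / t + pt α t θ * pt σ t θ / (2 * α t θ) + pth α t θ * pth σ t θ / 2
      - 2 * lam * (pt φ t θ * pt σ t θ - α t θ * pth φ t θ * pth σ t θ)

/-- A smooth, spatially `2π`-periodic solution of the Gowdy symmetric IIA system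
on the areal time interval `(Tm, Tp)`. -/
structure GowdySolution (Q lam Tm Tp : ℝ) where
  η : ℝ → ℝ → ℝ
  α : ℝ → ℝ → ℝ
  U : ℝ → ℝ → ℝ
  A : ℝ → ℝ → ℝ
  φ : ℝ → ℝ → ℝ
  σ : ℝ → ℝ → ℝ
  smooth : ∀ f ∈ ([η, α, U, A, φ, σ] : List (ℝ → ℝ → ℝ)),
    ContDiffOn ℝ (⊤ : ℕ∞) (fun p : ℝ × ℝ => f p.1 p.2) (Ioo Tm Tp ×ˢ (univ : Set ℝ))
  periodic : ∀ f ∈ ([η, α, U, A, φ, σ] : List (ℝ → ℝ → ℝ)), ∀ t θ : ℝ,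
    f t (θ + 2 * π) = f t θ
  sys : IsGowdyIIA Q lam (Ioo Tm Tp) η α U A φ σ

/-- The energy density `𝓔`. -/
def calE (lam : ℝ) (α U A φ σ : ℝ → ℝ → ℝ) (t θ : ℝ) : ℝ :=
  (pt U t θ) ^ 2 + α t θ * (pth U t θ) ^ 2
  + exp (4 * U t θ) / (4 * t ^ 2) * ((pt A t θ) ^ 2 + α t θ * (pth A t θ) ^ 2)
  + (1 / 4) * ((pt φ t θ) ^ 2 + α t θ * (pth φ t θ) ^ 2
      + exp (2 * lam * φ t θ) * ((pt σ t θ) ^ 2 + α t θ * (pth σ t θ) ^ 2))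

/-- The energy `E(t)` (integral over the circle `S¹ = [0, 2π]`). -/
def energyE (Q lam : ℝ) (η α U A φ σ : ℝ → ℝ → ℝ) (t : ℝ) : ℝ :=
  ∫ θ in Ioc (0 : ℝ) (2 * π),
    (1 / Real.sqrt (α t θ)) *
      (calE lam α U A φ σ t θ
        + (1 / 4) * α t θ * Q ^ 2 * exp (2 * (η t θ + lam * φ t θ - U t θ)))

/-- The energy `Ẽ(t)`. -/
def energyEt (lam : ℝ) (α U A φ σ : ℝ → ℝ → ℝ) (t : ℝ) : ℝ :=
  ∫ θ in Ioc (0 : ℝ) (2 * π), calE lam α U A φ σ t θ / Real.sqrt (α t θ)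

/-- The timelike convergence condition (TCC) for the Gowdy symmetric IIA system. -/
def TCC (Q lam Tm Tp : ℝ) (η α U φ σ : ℝ → ℝ → ℝ) : Prop :=
  ∀ t ∈ Ioo Tm Tp, ∀ θ : ℝ,
    (pt φ t θ) ^ 2 + exp (2 * lam * φ t θ) * (pt σ t θ) ^ 2
      ≥ (1 / 2) * α t θ * Q ^ 2 * exp (2 * (η t θ + lam * φ t θ - U t θ))

/-! ### Smooth functions on the strip `(a, b) × ℝ` -/

/-- Smoothness of a curried function of `(t, θ)` on the strip `(a, b) × ℝ`. -/
def Sm (a b : ℝ) (f : ℝ → ℝ → ℝ) : Prop :=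
  ContDiffOn ℝ (⊤ : ℕ∞) (fun p : ℝ × ℝ => f p.1 p.2) (Ioo a b ×ˢ (univ : Set ℝ))

lemma isOpen_strip (a b : ℝ) : IsOpen (Ioo a b ×ˢ (univ : Set ℝ)) :=
  isOpen_Ioo.prod isOpen_univ

lemma strip_mem_nhds {a b t : ℝ} (ht : t ∈ Ioo a b) (θ : ℝ) :
    Ioo a b ×ˢ (univ : Set ℝ) ∈ nhds (t, θ) :=
  (isOpen_strip a b).mem_nhds ⟨ht, mem_univ _⟩

lemma hasDerivAt_slice_t {g : ℝ × ℝ → ℝ} {t θ : ℝ} (h : DifferentiableAt ℝ g (t, θ)) :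
    HasDerivAt (fun s => g (s, θ)) (fderiv ℝ g (t, θ) (1, 0)) t :=
  h.hasFDerivAt.comp_hasDerivAt t ((hasDerivAt_id t).prodMk (hasDerivAt_const t θ))

lemma hasDerivAt_slice_th {g : ℝ × ℝ → ℝ} {t θ : ℝ} (h : DifferentiableAt ℝ g (t, θ)) :
    HasDerivAt (fun x => g (t, x)) (fderiv ℝ g (t, θ) (0, 1)) θ :=
  h.hasFDerivAt.comp_hasDerivAt θ ((hasDerivAt_const θ t).prodMk (hasDerivAt_id θ))

namespace Sm

variable {a b : ℝ} {f : ℝ → ℝ → ℝ}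

lemma const (c : ℝ) : Sm a b (fun _ _ => c) := contDiffOn_const

lemma contDiffAt (h : Sm a b f) {t : ℝ} (ht : t ∈ Ioo a b) (θ : ℝ) :
    ContDiffAt ℝ (⊤ : ℕ∞) (fun p : ℝ × ℝ => f p.1 p.2) (t, θ) :=
  ContDiffOn.contDiffAt h (strip_mem_nhds ht θ)

lemma differentiableAt (h : Sm a b f) {t : ℝ} (ht : t ∈ Ioo a b) (θ : ℝ) :
    DifferentiableAt ℝ (fun p : ℝ × ℝ => f p.1 p.2) (t, θ) :=
  (h.contDiffAt ht θ).differentiableAt (by simp)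

lemma pt_eq (h : Sm a b f) {t : ℝ} (ht : t ∈ Ioo a b) (θ : ℝ) :
    pt f t θ = fderiv ℝ (fun p : ℝ × ℝ => f p.1 p.2) (t, θ) (1, 0) :=
  (hasDerivAt_slice_t (h.differentiableAt ht θ)).deriv

lemma pth_eq (h : Sm a b f) {t : ℝ} (ht : t ∈ Ioo a b) (θ : ℝ) :
    pth f t θ = fderiv ℝ (fun p : ℝ × ℝ => f p.1 p.2) (t, θ) (0, 1) :=
  (hasDerivAt_slice_th (h.differentiableAt ht θ)).deriv

lemma hasDerivAt_t (h : Sm a b f) {t : ℝ} (ht : t ∈ Ioo a b) (θ : ℝ) :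
    HasDerivAt (fun s => f s θ) (pt f t θ) t :=
  (hasDerivAt_slice_t (h.differentiableAt ht θ)).differentiableAt.hasDerivAt

lemma hasDerivAt_th (h : Sm a b f) {t : ℝ} (ht : t ∈ Ioo a b) (θ : ℝ) :
    HasDerivAt (fun x => f t x) (pth f t θ) θ :=
  (hasDerivAt_slice_th (h.differentiableAt ht θ)).differentiableAt.hasDerivAt

lemma fderiv_contDiffOn (h : Sm a b f) :
    ContDiffOn ℝ (⊤ : ℕ∞) (fderiv ℝ (fun p : ℝ × ℝ => f p.1 p.2))
      (Ioo a b ×ˢ (univ : Set ℝ)) :=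
  ContDiffOn.fderiv_of_isOpen h (isOpen_strip a b) (by simp)

lemma pt (h : Sm a b f) : Sm a b (pt f) :=
  (h.fderiv_contDiffOn.clm_apply contDiffOn_const).congr
    fun p hp => h.pt_eq hp.1 p.2

lemma pth (h : Sm a b f) : Sm a b (pth f) :=
  (h.fderiv_contDiffOn.clm_apply contDiffOn_const).congr
    fun p hp => h.pth_eq hp.1 p.2

/-- Mixed partial derivatives commute. -/
lemma pt_pth (h : Sm a b f) {t : ℝ} (ht : t ∈ Ioo a b) (θ : ℝ) :
    _root_.pt (_root_.pth f) t θ = _root_.pth (_root_.pt f) t θ := by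
  have hd : DifferentiableAt ℝ (fderiv ℝ (fun p : ℝ × ℝ => f p.1 p.2)) (t, θ) :=
    (h.fderiv_contDiffOn.contDiffAt (strip_mem_nhds ht θ)).differentiableAt (by simp)
  have key : ∀ v : ℝ × ℝ, HasFDerivAt (fun p => fderiv ℝ (fun p : ℝ × ℝ => f p.1 p.2) p v)
      ((fderiv ℝ (fderiv ℝ (fun p : ℝ × ℝ => f p.1 p.2)) (t, θ)).flip v) (t, θ) := by
    intro v
    simpa using hd.hasFDerivAt.clm_apply (hasFDerivAt_const v (t, θ))
  have e1 : (fun p : ℝ × ℝ => _root_.pth f p.1 p.2) =ᶠ[nhds (t, θ)]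
      fun p => fderiv ℝ (fun p : ℝ × ℝ => f p.1 p.2) p (0, 1) :=
    eventually_of_mem (strip_mem_nhds ht θ) fun p hp => h.pth_eq hp.1 p.2
  have e2 : (fun p : ℝ × ℝ => _root_.pt f p.1 p.2) =ᶠ[nhds (t, θ)]
      fun p => fderiv ℝ (fun p : ℝ × ℝ => f p.1 p.2) p (1, 0) :=
    eventually_of_mem (strip_mem_nhds ht θ) fun p hp => h.pt_eq hp.1 p.2
  rw [h.pth.pt_eq ht θ, h.pt.pth_eq ht θ, e1.fderiv_eq, e2.fderiv_eq, (key _).fderiv,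
    (key _).fderiv]
  have hs := (h.contDiffAt ht θ).isSymmSndFDerivAt
    (by simpa using WithTop.coe_le_coe.2 (le_top : (2 : ℕ∞) ≤ ⊤))
  exact hs.eq _ _

lemma continuous_th (h : Sm a b f) {t : ℝ} (ht : t ∈ Ioo a b) : Continuous (fun θ => f t θ) :=
  continuous_iff_continuousAt.2 fun θ => (h.hasDerivAt_th ht θ).continuousAt

lemma continuousOn_t (h : Sm a b f) (θ : ℝ) : ContinuousOn (fun s => f s θ) (Ioo a b) :=
  fun _ ht => (h.hasDerivAt_t ht θ).continuousAt.continuousWithinAt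

lemma integrable (h : Sm a b f) {t : ℝ} (ht : t ∈ Ioo a b) (x y : ℝ) :
    IntegrableOn (fun θ => f t θ) (Ioc x y) :=
  ((h.continuous_th ht).integrableOn_Icc).mono_set Ioc_subset_Icc_self

/-- Differentiation under the integral sign over the circle. -/
lemma hasDerivAt_integral (h : Sm a b f) {t : ℝ} (ht : t ∈ Ioo a b) :
    HasDerivAt (fun s => ∫ θ in Ioc (0 : ℝ) (2 * π), f s θ)
      (∫ θ in Ioc (0 : ℝ) (2 * π), _root_.pt f t θ) t := by
  obtain ⟨ε, hε, hball⟩ := Metric.isOpen_iff.1 isOpen_Ioo t ht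
  have hcb : Metric.closedBall t (ε / 2) ⊆ Ioo a b :=
    (Metric.closedBall_subset_ball (by linarith)).trans hball
  have hK : IsCompact (Metric.closedBall t (ε / 2) ×ˢ Icc (0 : ℝ) (2 * π)) :=
    (isCompact_closedBall t (ε / 2)).prod isCompact_Icc
  have hc : ContinuousOn (fun p : ℝ × ℝ => _root_.pt f p.1 p.2)
      (Metric.closedBall t (ε / 2) ×ˢ Icc (0 : ℝ) (2 * π)) :=
    (ContDiffOn.continuousOn h.pt).mono (prod_mono hcb (subset_univ _))
  obtain ⟨M, hM⟩ := hK.exists_bound_of_continuousOn hc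
  refine (hasDerivAt_integral_of_dominated_loc_of_deriv_le
    (μ := volume.restrict (Ioc (0 : ℝ) (2 * π))) (F := fun s θ => f s θ)
    (F' := fun s θ => _root_.pt f s θ) (bound := fun _ => M)
    (Metric.closedBall_mem_nhds t (half_pos hε)) ?_ ?_ ?_ ?_ ?_ ?_).2
  · filter_upwards [isOpen_Ioo.mem_nhds ht] with s hs
    exact (h.continuous_th hs).aestronglyMeasurable
  · exact h.integrable ht _ _
  · exact (h.pt.continuous_th ht).aestronglyMeasurable
  · filter_upwards [ae_restrict_mem measurableSet_Ioc] with θ hθ s hs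
    exact hM (s, θ) ⟨hs, Ioc_subset_Icc_self hθ⟩
  · exact integrable_const _
  · filter_upwards with θ s hs
    exact h.hasDerivAt_t (hcb hs) θ

lemma integral_pth_eq_zero (h : Sm a b f) (hper : ∀ t θ, f t (θ + 2 * π) = f t θ)
    {t : ℝ} (ht : t ∈ Ioo a b) :
    ∫ θ in Ioc (0 : ℝ) (2 * π), _root_.pth f t θ = 0 := by
  rw [← intervalIntegral.integral_of_le (by positivity),
    intervalIntegral.integral_eq_sub_of_hasDerivAt (f := fun θ => f t θ)
      (fun θ _ => h.hasDerivAt_th ht θ) ((h.pth.continuous_th ht).intervalIntegrable _ _)]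
  have := hper t 0
  simp only [zero_add] at this
  rw [this, sub_self]

/-- The variation of a smooth periodic function over the circle bounds its oscillation. -/
lemma sub_le_integral (h : Sm a b f) (hper : ∀ t θ, f t (θ + 2 * π) = f t θ)
    {t : ℝ} (ht : t ∈ Ioo a b) (θ₁ θ₂ : ℝ) :
    f t θ₁ - f t θ₂ ≤ ∫ θ in Ioc (0 : ℝ) (2 * π), |_root_.pth f t θ| := by
  have hp : Function.Periodic (fun θ => f t θ) (2 * π) := hper t
  obtain ⟨x, hx, hx'⟩ := hp.exists_mem_Ico₀ (by positivity) θ₁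
  obtain ⟨y, hy, hy'⟩ := hp.exists_mem_Ico₀ (by positivity) θ₂
  rw [hx', hy', ← intervalIntegral.integral_eq_sub_of_hasDerivAt (f := fun θ => f t θ)
      (fun θ _ => h.hasDerivAt_th ht θ) ((h.pth.continuous_th ht).intervalIntegrable _ _)]
  refine (le_abs_self _).trans ?_
  rw [← Real.norm_eq_abs]
  refine intervalIntegral.norm_integral_le_integral_norm_uIoc.trans ?_
  refine setIntegral_mono_set ?_ ?_ ?_
  · exact ((h.pth.continuous_th ht).abs.integrableOn_Icc).mono_set Ioc_subset_Icc_self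
  · filter_upwards with θ using abs_nonneg _
  · refine Eventually.of_forall fun z hz => ?_
    replace hz : z ∈ Ioc (min y x) (max y x) := hz
    exact ⟨lt_of_le_of_lt (le_min hy.1 hx.1) hz.1, hz.2.trans (max_le hy.2.le hx.2.le)⟩

end Sm

/-! ### The energy identity for one wave field -/

/-- Energy identity for a wave field `f` with weight `m` and wave speed `√α`: the time derivative
of the density is the `θ`-derivative of the flux plus source terms without second derivatives,
once the wave equation for `f` is inserted. -/
lemma wave_identity {a b : ℝ} {α m f : ℝ → ℝ → ℝ} (hα : Sm a b α) (hm : Sm a b m)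
    (hf : Sm a b f) {t : ℝ} (ht : t ∈ Ioo a b) (θ : ℝ) (hpos : 0 < α t θ) {R : ℝ}
    (hR : pt (pt f) t θ - α t θ * pth (pth f) t θ =
      pt α t θ * pt f t θ / (2 * α t θ) + pth α t θ * pth f t θ / 2 + R) :
    ∃ D, HasDerivAt (fun x => 2 * √(α t x) * m t x * pt f t x * pth f t x) D θ ∧
      HasDerivAt (fun s => m s θ * ((pt f s θ) ^ 2 + α s θ * (pth f s θ) ^ 2) / √(α s θ))
        (D + (1 / √(α t θ)) * (pt m t θ * ((pt f t θ) ^ 2 + α t θ * (pth f t θ) ^ 2)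
          - 2 * α t θ * pth m t θ * pt f t θ * pth f t θ
          + m t θ * (pt α t θ / (2 * α t θ) * ((pt f t θ) ^ 2 + α t θ * (pth f t θ) ^ 2)
            + 2 * pt f t θ * R))) t := by
  have hs : 0 < √(α t θ) := Real.sqrt_pos.2 hpos
  have h1 := ((((((hα.hasDerivAt_th ht θ).sqrt hpos.ne').const_mul 2).mul
    (hm.hasDerivAt_th ht θ)).mul (hf.pt.hasDerivAt_th ht θ)).mul (hf.pth.hasDerivAt_th ht θ))
  have h2 := ((hm.hasDerivAt_t ht θ).mul (((hf.pt.hasDerivAt_t ht θ).pow 2).add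
    ((hα.hasDerivAt_t ht θ).mul ((hf.pth.hasDerivAt_t ht θ).pow 2)))).div
    ((hα.hasDerivAt_t ht θ).sqrt hpos.ne') hs.ne'
  refine ⟨_, h1, ?_⟩
  refine h2.congr_deriv ?_
  simp only [Pi.mul_apply, Pi.add_apply, Pi.pow_apply]
  rw [hf.pt_pth ht θ]
  have e : pt (pt f) t θ = α t θ * pth (pth f) t θ +
      (pt α t θ * pt f t θ / (2 * α t θ) + pth α t θ * pth f t θ / 2 + R) := by linarith
  rw [e]
  have e2 : α t θ = √(α t θ) ^ 2 := (Real.sq_sqrt hpos.le).symm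
  set r := √(α t θ)
  rw [e2]
  field_simp
  ring

/-! ### Energy identities for the full system -/

namespace GowdySolution

variable {Q lam Tm Tp : ℝ} (G : GowdySolution Q lam Tm Tp)

lemma smη : Sm Tm Tp G.η := G.smooth _ (by simp)
lemma smα : Sm Tm Tp G.α := G.smooth _ (by simp)
lemma smU : Sm Tm Tp G.U := G.smooth _ (by simp)
lemma smA : Sm Tm Tp G.A := G.smooth _ (by simp)
lemma smφ : Sm Tm Tp G.φ := G.smooth _ (by simp)
lemma smσ : Sm Tm Tp G.σ := G.smooth _ (by simp)

lemma perη : ∀ t θ, G.η t (θ + 2 * π) = G.η t θ := G.periodic _ (by simp)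
lemma perα : ∀ t θ, G.α t (θ + 2 * π) = G.α t θ := G.periodic _ (by simp)
lemma perU : ∀ t θ, G.U t (θ + 2 * π) = G.U t θ := G.periodic _ (by simp)
lemma perA : ∀ t θ, G.A t (θ + 2 * π) = G.A t θ := G.periodic _ (by simp)
lemma perφ : ∀ t θ, G.φ t (θ + 2 * π) = G.φ t θ := G.periodic _ (by simp)
lemma perσ : ∀ t θ, G.σ t (θ + 2 * π) = G.σ t θ := G.periodic _ (by simp)

end GowdySolution

lemma pt_periodic {f : ℝ → ℝ → ℝ} (h : ∀ t θ, f t (θ + 2 * π) = f t θ) (t θ : ℝ) :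
    pt f t (θ + 2 * π) = pt f t θ := by
  simp only [pt, h]

lemma pth_periodic {f : ℝ → ℝ → ℝ} (h : ∀ t θ, f t (θ + 2 * π) = f t θ) (t θ : ℝ) :
    pth f t (θ + 2 * π) = pth f t θ := by
  unfold pth
  rw [← deriv_comp_add_const]
  simp only [h]

namespace GowdySolution

variable {Q lam Tm Tp : ℝ} (G : GowdySolution Q lam Tm Tp)

/-- The potential energy density `V = α Q² e^{2(η + λφ - U)}`. -/
def V (t θ : ℝ) : ℝ :=
  G.α t θ * Q ^ 2 * exp (2 * lam * G.φ t θ + 2 * (G.η t θ - G.U t θ))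

/-- The part of the energy density that dissipates as `t` grows. -/
def K (t θ : ℝ) : ℝ :=
  (pt G.U t θ) ^ 2 + exp (4 * G.U t θ) / (4 * t ^ 2) * (G.α t θ * (pth G.A t θ) ^ 2)
  + (1 / 4) * ((pt G.φ t θ) ^ 2 + exp (2 * lam * G.φ t θ) * (pt G.σ t θ) ^ 2)

/-- The energy density `𝓔` of the solution. -/
def eps (t θ : ℝ) : ℝ := calE lam G.α G.U G.A G.φ G.σ t θ

/-- The work term `t 𝓔 - U̇ + λ φ̇`; multiplied by `V / (2 √α)` it is the rate at which the energy
`Ẽ` is turned into potential energy. -/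
def work (t θ : ℝ) : ℝ := t * G.eps t θ - pt G.U t θ + lam * pt G.φ t θ

/-- The spatial flux of the energy. -/
def flux (t θ : ℝ) : ℝ :=
  2 * √(G.α t θ) * 1 * pt G.U t θ * pth G.U t θ
  + 2 * √(G.α t θ) * (exp (4 * G.U t θ) / (4 * t ^ 2)) * pt G.A t θ * pth G.A t θ
  + 2 * √(G.α t θ) * (1 / 4) * pt G.φ t θ * pth G.φ t θ
  + 2 * √(G.α t θ) * (exp (2 * lam * G.φ t θ) / 4) * pt G.σ t θ * pth G.σ t θ

lemma sm_time (hTm : 0 < Tm) : Sm Tm Tp (fun t _ => 1 / (4 * t ^ 2)) := by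
  unfold Sm
  refine contDiffOn_const.div (by fun_prop) fun p hp => ?_
  have : 0 < p.1 := hTm.trans hp.1.1
  positivity

lemma sm_expU : Sm Tm Tp (fun t θ => exp (4 * G.U t θ)) :=
  (contDiffOn_const.mul G.smU).exp

lemma sm_expφ : Sm Tm Tp (fun t θ => exp (2 * lam * G.φ t θ)) :=
  (contDiffOn_const.mul G.smφ).exp

lemma sm_sqrt : Sm Tm Tp (fun t θ => √(G.α t θ)) :=
  ContDiffOn.sqrt G.smα fun p hp => (G.sys.alpha_pos p.1 hp.1 p.2).ne'

lemma sm_weightA (hTm : 0 < Tm) : Sm Tm Tp (fun t θ => exp (4 * G.U t θ) / (4 * t ^ 2)) :=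
  (ContDiffOn.mul G.sm_expU (sm_time hTm)).congr fun p _ => by simp only; ring

lemma sqrt_pos {t : ℝ} (ht : t ∈ Ioo Tm Tp) (θ : ℝ) : 0 < √(G.α t θ) :=
  Real.sqrt_pos.2 (G.sys.alpha_pos t ht θ)

lemma sm_eps (hTm : 0 < Tm) : Sm Tm Tp G.eps := by
  have h : ∀ {f : ℝ → ℝ → ℝ}, Sm Tm Tp f →
      Sm Tm Tp (fun t θ => (pt f t θ) ^ 2 + G.α t θ * (pth f t θ) ^ 2) := fun hf =>
    (ContDiffOn.pow hf.pt 2).add (ContDiffOn.mul G.smα (ContDiffOn.pow hf.pth 2))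
  have h1 : Sm Tm Tp (fun t θ => ((pt G.U t θ) ^ 2 + G.α t θ * (pth G.U t θ) ^ 2)
      + exp (4 * G.U t θ) / (4 * t ^ 2) * ((pt G.A t θ) ^ 2 + G.α t θ * (pth G.A t θ) ^ 2)
      + (1 / 4) * (((pt G.φ t θ) ^ 2 + G.α t θ * (pth G.φ t θ) ^ 2)
      + exp (2 * lam * G.φ t θ) * ((pt G.σ t θ) ^ 2 + G.α t θ * (pth G.σ t θ) ^ 2))) :=
    ((h G.smU).add (ContDiffOn.mul (G.sm_weightA hTm) (h G.smA))).add
      (contDiffOn_const.mul ((h G.smφ).add (ContDiffOn.mul G.sm_expφ (h G.smσ))))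
  exact ContDiffOn.congr h1 fun p _ => rfl

lemma sm_density (hTm : 0 < Tm) : Sm Tm Tp (fun t θ => G.eps t θ / √(G.α t θ)) :=
  ContDiffOn.div (G.sm_eps hTm) G.sm_sqrt fun p hp => (G.sqrt_pos hp.1 p.2).ne'

lemma sm_V : Sm Tm Tp G.V :=
  (ContDiffOn.mul (ContDiffOn.mul G.smα contDiffOn_const)
    (((contDiffOn_const.mul G.smφ).add (contDiffOn_const.mul (ContDiffOn.sub G.smη G.smU))).exp))

lemma sm_flux (hTm : 0 < Tm) : Sm Tm Tp G.flux := by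
  have h : ∀ {m f : ℝ → ℝ → ℝ}, Sm Tm Tp m → Sm Tm Tp f →
      Sm Tm Tp (fun t θ => 2 * √(G.α t θ) * m t θ * pt f t θ * pth f t θ) := fun hm hf =>
    ContDiffOn.mul (ContDiffOn.mul (ContDiffOn.mul (contDiffOn_const.mul G.sm_sqrt) hm) hf.pt)
      hf.pth
  exact (((h (Sm.const 1) G.smU).add (h (G.sm_weightA hTm) G.smA)).add
    (h (Sm.const (1 / 4)) G.smφ)).add
      (h (m := fun t θ => exp (2 * lam * G.φ t θ) / 4) (ContDiffOn.div_const G.sm_expφ 4) G.smσ)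

lemma flux_periodic (t θ : ℝ) : G.flux t (θ + 2 * π) = G.flux t θ := by
  simp only [flux, G.perα, G.perU, G.perφ, pt_periodic G.perU, pt_periodic G.perA,
    pt_periodic G.perφ, pt_periodic G.perσ, pth_periodic G.perU, pth_periodic G.perA,
    pth_periodic G.perφ, pth_periodic G.perσ]

lemma pt_alpha_eq {t : ℝ} (ht : t ∈ Ioo Tm Tp) (θ : ℝ) :
    pt G.α t θ = - t * G.α t θ * G.V t θ := by
  rw [G.sys.constraint_α t ht θ, V]; ring

lemma pt_eta_eq (hTm : 0 < Tm) {t : ℝ} (ht : t ∈ Ioo Tm Tp) (θ : ℝ) :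
    pt G.η t θ = t * (G.eps t θ + G.V t θ / 4) := by
  have h0 : t ≠ 0 := (hTm.trans ht.1).ne'
  have := G.sys.constraint_t t ht θ
  rw [div_eq_iff h0] at this
  rw [this, eps, calE, V]; ring

/-- Local form of the balance law for `Ẽ`. -/
lemma pt_density (hTm : 0 < Tm) {t : ℝ} (ht : t ∈ Ioo Tm Tp) (θ : ℝ) :
    pt (fun t θ => G.eps t θ / √(G.α t θ)) t θ = pth G.flux t θ
      - (1 / √(G.α t θ)) * (G.V t θ / 2 * G.work t θ + 2 / t * G.K t θ) := by
  have h0 : t ≠ 0 := (hTm.trans ht.1).ne'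
  have hpos := G.sys.alpha_pos t ht θ
  have hs := G.sqrt_pos ht θ
  have hU := G.smU.hasDerivAt_t ht θ
  have hU' := G.smU.hasDerivAt_th ht θ
  have hφ := G.smφ.hasDerivAt_t ht θ
  have hφ' := G.smφ.hasDerivAt_th ht θ
  have m1 : pt (fun _ _ => (1 : ℝ)) t θ = 0 := by simp [pt]
  have m1' : pth (fun _ _ => (1 : ℝ)) t θ = 0 := by simp [pth]
  have m3 : pt (fun _ _ => (1 / 4 : ℝ)) t θ = 0 := by simp [pt]
  have m3' : pth (fun _ _ => (1 / 4 : ℝ)) t θ = 0 := by simp [pth]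
  have m2 : pt (fun t θ => exp (4 * G.U t θ) / (4 * t ^ 2)) t θ
      = exp (4 * G.U t θ) / (4 * t ^ 2) * (4 * pt G.U t θ - 2 / t) := by
    have := ((hU.const_mul 4).exp).div (((hasDerivAt_id t).pow 2).const_mul 4)
      (by simp [h0])
    refine this.deriv.trans ?_
    simp
    field_simp
  have m2' : pth (fun t θ => exp (4 * G.U t θ) / (4 * t ^ 2)) t θ
      = exp (4 * G.U t θ) / (4 * t ^ 2) * (4 * pth G.U t θ) := by
    refine (((hU'.const_mul 4).exp).div_const (4 * t ^ 2)).deriv.trans ?_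
    ring
  have m4 : pt (fun t θ => exp (2 * lam * G.φ t θ) / 4) t θ
      = exp (2 * lam * G.φ t θ) / 4 * (2 * lam * pt G.φ t θ) := by
    refine (((hφ.const_mul (2 * lam)).exp).div_const 4).deriv.trans ?_
    ring
  have m4' : pth (fun t θ => exp (2 * lam * G.φ t θ) / 4) t θ
      = exp (2 * lam * G.φ t θ) / 4 * (2 * lam * pth G.φ t θ) := by
    refine (((hφ'.const_mul (2 * lam)).exp).div_const 4).deriv.trans ?_
    ring
  obtain ⟨D1, f1, d1⟩ := wave_identity G.smα (Sm.const 1) G.smU ht θ hpos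
    (R := - pt G.U t θ / t + exp (4 * G.U t θ) / (2 * t ^ 2)
      * ((pt G.A t θ) ^ 2 - G.α t θ * (pth G.A t θ) ^ 2) + (1 / 4) * G.V t θ)
    (by rw [G.sys.evol_U t ht θ, V]; ring)
  obtain ⟨D2, f2, d2⟩ := wave_identity G.smα (G.sm_weightA hTm) G.smA ht θ hpos
    (R := pt G.A t θ / t
      - 4 * (pt G.A t θ * pt G.U t θ - G.α t θ * pth G.A t θ * pth G.U t θ))
    (by rw [G.sys.evol_A t ht θ]; ring)
  obtain ⟨D3, f3, d3⟩ := wave_identity G.smα (Sm.const (1 / 4)) G.smφ ht θ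
    hpos (R := - pt G.φ t θ / t + lam * exp (2 * lam * G.φ t θ)
      * ((pt G.σ t θ) ^ 2 - G.α t θ * (pth G.σ t θ) ^ 2) - lam * G.V t θ)
    (by rw [G.sys.evol_φ t ht θ, V]; ring)
  obtain ⟨D4, f4, d4⟩ := wave_identity G.smα (m := fun t θ => exp (2 * lam * G.φ t θ) / 4)
    (ContDiffOn.div_const G.sm_expφ 4) G.smσ ht θ hpos (R := - pt G.σ t θ / t
      - 2 * lam * (pt G.φ t θ * pt G.σ t θ - G.α t θ * pth G.φ t θ * pth G.σ t θ))
    (by rw [G.sys.evol_σ t ht θ]; ring)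
  have hflux : pth G.flux t θ = D1 + D2 + D3 + D4 :=
    (((f1.add f2).add f3).add f4).deriv
  have hdens := (((d1.add d2).add d3).add d4)
  refine (Eq.trans ?_ hdens.deriv).trans ?_
  · unfold pt
    congr 1
    funext s
    simp only [eps, calE, Pi.add_apply, pt]
    ring
  rw [hflux, m1, m1', m2, m2', m3, m3', m4, m4', G.pt_alpha_eq ht θ, work, K, eps, calE]
  field_simp
  ring

/-- Local form of the balance law for the potential energy. -/
lemma pt_potential (hTm : 0 < Tm) {t : ℝ} (ht : t ∈ Ioo Tm Tp) (θ : ℝ) :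
    pt (fun t θ => G.V t θ / 4 / √(G.α t θ)) t θ
      = (1 / √(G.α t θ)) * (G.V t θ / 2 * G.work t θ) := by
  have hpos := G.sys.alpha_pos t ht θ
  have hs := G.sqrt_pos ht θ
  have hα := G.smα.hasDerivAt_t ht θ
  have h := (((((hα.mul_const (Q ^ 2)).mul
    (((G.smφ.hasDerivAt_t ht θ).const_mul (2 * lam)).add
      (((G.smη.hasDerivAt_t ht θ).sub (G.smU.hasDerivAt_t ht θ)).const_mul 2)).exp)).div_const
    4).div (hα.sqrt hpos.ne') hs.ne')
  refine h.deriv.trans ?_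
  simp only [Pi.mul_apply, Pi.add_apply, Pi.sub_apply]
  rw [G.pt_alpha_eq ht θ, G.pt_eta_eq hTm ht θ, work, V]
  have e2 : G.α t θ = √(G.α t θ) ^ 2 := (Real.sq_sqrt hpos.le).symm
  set r := √(G.α t θ)
  rw [e2]
  field_simp
  ring

end GowdySolution

/-! ### Balance laws and bounds for the energies -/

/-- A local balance law `∂ₜF = ∂_θP - S` with periodic flux `P` integrates to
`d/dt ∫F = -∫S` over the circle. -/
lemma hasDerivAt_of_balance {a b : ℝ} {F P : ℝ → ℝ → ℝ} (hF : Sm a b F) (hP : Sm a b P)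
    (hper : ∀ t θ, P t (θ + 2 * π) = P t θ) {t : ℝ} (ht : t ∈ Ioo a b) {S : ℝ → ℝ}
    (hS : ∀ θ, pt F t θ = pth P t θ - S θ) :
    IntegrableOn S (Ioc 0 (2 * π)) ∧
      HasDerivAt (fun s => ∫ θ in Ioc (0 : ℝ) (2 * π), F s θ)
        (-∫ θ in Ioc (0 : ℝ) (2 * π), S θ) t := by
  have e : S = fun θ => pth P t θ - pt F t θ := by
    funext θ; rw [hS θ]; ring
  have i1 := hP.pth.integrable ht 0 (2 * π)
  have i2 := hF.pt.integrable ht 0 (2 * π)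
  refine ⟨e ▸ i1.sub i2, (hF.hasDerivAt_integral ht).congr_deriv ?_⟩
  rw [e, integral_sub i1 i2, hP.integral_pth_eq_zero hper ht]
  ring

namespace GowdySolution

variable {Q lam Tm Tp : ℝ} (G : GowdySolution Q lam Tm Tp)

/-- The energy `Ẽ(t)`. -/
def Et (t : ℝ) : ℝ := ∫ θ in Ioc (0 : ℝ) (2 * π), G.eps t θ / √(G.α t θ)

/-- The full energy `E(t)`, including the potential energy. -/
def Efull (t : ℝ) : ℝ :=
  ∫ θ in Ioc (0 : ℝ) (2 * π), (G.eps t θ / √(G.α t θ) + G.V t θ / 4 / √(G.α t θ))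

lemma eps_nonneg {t : ℝ} (ht : t ∈ Ioo Tm Tp) (θ : ℝ) : 0 ≤ G.eps t θ := by
  have := (G.sys.alpha_pos t ht θ).le
  unfold eps calE
  positivity

lemma V_pos (hQ : Q ≠ 0) {t : ℝ} (ht : t ∈ Ioo Tm Tp) (θ : ℝ) : 0 < G.V t θ := by
  have := G.sys.alpha_pos t ht θ
  unfold V
  positivity

lemma V_nonneg {t : ℝ} (ht : t ∈ Ioo Tm Tp) (θ : ℝ) : 0 ≤ G.V t θ := by
  have := (G.sys.alpha_pos t ht θ).le
  unfold V
  positivity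

lemma K_le_eps {t : ℝ} (ht : t ∈ Ioo Tm Tp) (θ : ℝ) : G.K t θ ≤ G.eps t θ := by
  have := (G.sys.alpha_pos t ht θ).le
  have e : G.eps t θ - G.K t θ = G.α t θ * (pth G.U t θ) ^ 2
      + exp (4 * G.U t θ) / (4 * t ^ 2) * (pt G.A t θ) ^ 2
      + (1 / 4) * (G.α t θ * (pth G.φ t θ) ^ 2
        + exp (2 * lam * G.φ t θ) * (G.α t θ * (pth G.σ t θ) ^ 2)) := by
    unfold eps calE K; ring
  have : 0 ≤ G.eps t θ - G.K t θ := by rw [e]; positivity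
  linarith

/-- The timelike convergence condition in terms of `V` and `K`. -/
lemma tcc_V (htcc : TCC Q lam Tm Tp G.η G.α G.U G.φ G.σ) {t : ℝ} (ht : t ∈ Ioo Tm Tp)
    (θ : ℝ) : G.V t θ / 8 ≤ G.K t θ := by
  have h := htcc t ht θ
  have hα := (G.sys.alpha_pos t ht θ).le
  have e : exp (2 * (G.η t θ + lam * G.φ t θ - G.U t θ))
      = exp (2 * lam * G.φ t θ + 2 * (G.η t θ - G.U t θ)) := by ring_nf
  rw [e] at h
  have h2 : 0 ≤ (pt G.U t θ) ^ 2
      + exp (4 * G.U t θ) / (4 * t ^ 2) * (G.α t θ * (pth G.A t θ) ^ 2) := by positivity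
  unfold K V
  linarith

lemma kinetic_le_eps {t : ℝ} (ht : t ∈ Ioo Tm Tp) (θ : ℝ) :
    (pt G.U t θ) ^ 2 + (pt G.φ t θ) ^ 2 / 4 ≤ G.eps t θ := by
  refine le_trans ?_ (G.K_le_eps ht θ)
  have hα := (G.sys.alpha_pos t ht θ).le
  have h2 : 0 ≤ exp (4 * G.U t θ) / (4 * t ^ 2) * (G.α t θ * (pth G.A t θ) ^ 2)
    + exp (2 * lam * G.φ t θ) * (pt G.σ t θ) ^ 2 / 4 := by positivity
  unfold K
  linarith

lemma sm_pot : Sm Tm Tp (fun t θ => G.V t θ / 4 / √(G.α t θ)) :=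
  ContDiffOn.div (ContDiffOn.div_const G.sm_V 4) G.sm_sqrt
      fun p hp => (G.sqrt_pos hp.1 p.2).ne'

lemma sm_full (hTm : 0 < Tm) :
    Sm Tm Tp (fun t θ => G.eps t θ / √(G.α t θ) + G.V t θ / 4 / √(G.α t θ)) :=
  ContDiffOn.add (G.sm_density hTm) G.sm_pot

lemma hasDerivAt_Et (hTm : 0 < Tm) {t : ℝ} (ht : t ∈ Ioo Tm Tp) :
    IntegrableOn (fun θ => (1 / √(G.α t θ)) * (G.V t θ / 2 * G.work t θ + 2 / t * G.K t θ))
      (Ioc 0 (2 * π)) ∧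
    HasDerivAt G.Et (-∫ θ in Ioc (0 : ℝ) (2 * π),
      (1 / √(G.α t θ)) * (G.V t θ / 2 * G.work t θ + 2 / t * G.K t θ)) t :=
  hasDerivAt_of_balance (G.sm_density hTm) (G.sm_flux hTm) G.flux_periodic ht
    (fun θ => G.pt_density hTm ht θ)

/-- In the balance law of the full energy the work terms cancel. -/
lemma hasDerivAt_Efull (hTm : 0 < Tm) {t : ℝ} (ht : t ∈ Ioo Tm Tp) :
    IntegrableOn (fun θ => (1 / √(G.α t θ)) * (2 / t * G.K t θ)) (Ioc 0 (2 * π)) ∧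
    HasDerivAt G.Efull (-∫ θ in Ioc (0 : ℝ) (2 * π), (1 / √(G.α t θ)) * (2 / t * G.K t θ)) t := by
  refine hasDerivAt_of_balance (G.sm_full hTm) (G.sm_flux hTm) G.flux_periodic ht fun θ => ?_
  have h := (((G.sm_density hTm).hasDerivAt_t ht θ).add (G.sm_pot.hasDerivAt_t ht θ)).deriv
  refine h.trans ?_
  rw [G.pt_density hTm ht θ, G.pt_potential hTm ht θ]
  ring

/-- `t² E(t)` is nondecreasing. -/
lemma Efull_mono (hTm : 0 < Tm) : MonotoneOn (fun t => t ^ 2 * G.Efull t) (Ioo Tm Tp) := by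
  have hd : ∀ t ∈ Ioo Tm Tp, HasDerivAt (fun t => t ^ 2 * G.Efull t)
      (2 * t * G.Efull t + t ^ 2 * -∫ θ in Ioc (0 : ℝ) (2 * π),
        (1 / √(G.α t θ)) * (2 / t * G.K t θ)) t := by
    intro t ht
    refine (((hasDerivAt_id t).pow 2).mul (G.hasDerivAt_Efull hTm ht).2).congr_deriv ?_
    simp
  refine monotoneOn_of_deriv_nonneg (convex_Ioo _ _)
    (fun t ht => (hd t ht).continuousAt.continuousWithinAt)
    (fun t ht => (hd t (interior_subset ht)).differentiableAt.differentiableWithinAt) ?_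
  intro t ht
  rw [interior_Ioo] at ht
  rw [(hd t ht).deriv]
  have t0 : 0 < t := hTm.trans ht.1
  have hle : ∫ θ in Ioc (0 : ℝ) (2 * π), (1 / √(G.α t θ)) * (2 / t * G.K t θ)
      ≤ 2 / t * G.Efull t := by
    rw [Efull, ← integral_const_mul]
    refine integral_mono (G.hasDerivAt_Efull hTm ht).1
      (((G.sm_full hTm).integrable ht 0 (2 * π)).const_mul _) fun θ => ?_
    have hs := G.sqrt_pos ht θ
    have h1 := G.K_le_eps ht θ
    have h2 := G.V_nonneg ht θ
    have e : 2 / t * (G.eps t θ / √(G.α t θ) + G.V t θ / 4 / √(G.α t θ))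
        = (1 / √(G.α t θ)) * (2 / t * (G.eps t θ + G.V t θ / 4)) := by ring
    simp only [e]
    gcongr
    linarith
  have e : t ^ 2 * (2 / t * G.Efull t) = 2 * t * G.Efull t := by field_simp
  nlinarith [mul_le_mul_of_nonneg_left hle (sq_nonneg t)]

lemma Efull_nonneg {t : ℝ} (ht : t ∈ Ioo Tm Tp) : 0 ≤ G.Efull t := by
  refine integral_nonneg fun θ => ?_
  have h1 := G.eps_nonneg ht θ
  have h2 := G.V_nonneg ht θ
  have hs := G.sqrt_pos ht θ
  positivity

lemma Et_le_Efull (hTm : 0 < Tm) {t : ℝ} (ht : t ∈ Ioo Tm Tp) : G.Et t ≤ G.Efull t := by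
  refine integral_mono ((G.sm_density hTm).integrable ht 0 (2 * π))
    ((G.sm_full hTm).integrable ht 0 (2 * π)) fun θ => ?_
  have h2 := G.V_nonneg ht θ
  have hs := G.sqrt_pos ht θ
  have : 0 ≤ G.V t θ / 4 / √(G.α t θ) := by positivity
  simp only
  linarith

/-- `Ẽ` is bounded to the past, because the areal time stays above `Tm > 0`. -/
lemma Et_le (hTm : 0 < Tm) {t ti : ℝ} (ht : t ∈ Ioo Tm Tp) (hti : ti ∈ Ioo Tm Tp) (h : t ≤ ti) :
    G.Et t ≤ ti ^ 2 * G.Efull ti / Tm ^ 2 := by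
  rw [le_div_iff₀ (by positivity)]
  have h1 := G.Efull_mono hTm ht hti h
  have h2 := G.Efull_nonneg ht
  have h3 := G.Et_le_Efull hTm ht
  simp only at h1
  have h4 : Tm ^ 2 ≤ t ^ 2 := by have := ht.1; gcongr
  calc G.Et t * Tm ^ 2 ≤ G.Efull t * Tm ^ 2 := by gcongr
    _ ≤ G.Efull t * t ^ 2 := by gcongr
    _ ≤ _ := by linarith

/-- The timelike convergence condition makes the dissipation of `Ẽ` dominate
`(1/4 - λ²) t V 𝓔`, a positive quantity when `|λ| < 1/2`. Completing
squares bounds the work term below by `(1/2 - 2λ²) t 𝓔 - 1 / (2t)`,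
and the kinetic energy of the scalar fields absorbs the loss. -/
lemma dissipation_ge (hTm : 0 < Tm) (htcc : TCC Q lam Tm Tp G.η G.α G.U G.φ G.σ)
    {t : ℝ} (ht : t ∈ Ioo Tm Tp) (θ : ℝ) :
    (1 / 4 - lam ^ 2) * t * G.V t θ * G.eps t θ
      ≤ G.V t θ / 2 * G.work t θ + 2 / t * G.K t θ := by
  have t0 : 0 < t := hTm.trans ht.1
  have hV := G.V_nonneg ht θ
  have h1 := G.kinetic_le_eps ht θ
  have h2 := G.tcc_V htcc ht θ
  unfold work
  set u := pt G.U t θ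
  set p := pt G.φ t θ
  set e := G.eps t θ
  set c : ℝ := 1 / 2 + 2 * lam ^ 2 with hc
  have c0 : 0 < c := by positivity
  have key : 0 ≤ c * (t * u) ^ 2 - t * u + c * (t * p) ^ 2 / 4 + lam * (t * p) + 1 / 2 := by
    refine nonneg_of_mul_nonneg_right ?_ c0
    have : c * (c * (t * u) ^ 2 - t * u + c * (t * p) ^ 2 / 4 + lam * (t * p) + 1 / 2)
        = (c * (t * u) - 1 / 2) ^ 2 + (c * (t * p) / 2 + lam) ^ 2 := by
      rw [hc]; ring
    rw [this]; positivity
  have k2 : 0 ≤ t * (c * t * e - u + lam * p) + 1 / 2 := by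
    have : c * t ^ 2 * (u ^ 2 + p ^ 2 / 4) ≤ c * t ^ 2 * e := by gcongr
    nlinarith
  have k3 : 2 / t * (G.V t θ / 8) ≤ 2 / t * G.K t θ := by gcongr
  have k4 : 0 ≤ G.V t θ / (2 * t) * (t * (c * t * e - u + lam * p) + 1 / 2) := by positivity
  have k5 : G.V t θ / (2 * t) * (t * (c * t * e - u + lam * p) + 1 / 2)
      = G.V t θ / 2 * (t * e - u + lam * p) + 2 / t * (G.V t θ / 8)
        - (1 / 4 - lam ^ 2) * t * G.V t θ * e := by
    rw [hc]; field_simp; ring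
  linarith

/-! ### Spatial oscillation of the potential -/

/-- The exponent `γ + λφ - U`, with `γ = η + (1/2) log α`. -/
def g (t θ : ℝ) : ℝ :=
  (G.η t θ + 1 / 2 * Real.log (G.α t θ)) + lam * G.φ t θ - G.U t θ

lemma sm_logα : Sm Tm Tp (fun t θ => Real.log (G.α t θ)) :=
  ContDiffOn.log G.smα fun p hp => (G.sys.alpha_pos p.1 hp.1 p.2).ne'

lemma sm_γ : Sm Tm Tp (fun t θ => G.η t θ + 1 / 2 * Real.log (G.α t θ)) :=
  ContDiffOn.add G.smη (contDiffOn_const.mul G.sm_logα)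

lemma sm_g : Sm Tm Tp G.g :=
  ContDiffOn.sub (ContDiffOn.add G.sm_γ (contDiffOn_const.mul G.smφ)) G.smU

lemma V_eq {t : ℝ} (ht : t ∈ Ioo Tm Tp) (θ : ℝ) : G.V t θ = Q ^ 2 * exp (2 * G.g t θ) := by
  have e : 2 * G.g t θ = Real.log (G.α t θ)
      + (2 * lam * G.φ t θ + 2 * (G.η t θ - G.U t θ)) := by unfold g; ring
  rw [e, exp_add, Real.exp_log (G.sys.alpha_pos t ht θ), V]
  ring

lemma abs_two_mul_le (r x y : ℝ) : |r * (2 * (x * y))| ≤ x ^ 2 + r ^ 2 * y ^ 2 := by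
  rw [abs_le]
  constructor <;> nlinarith [sq_nonneg (x + r * y), sq_nonneg (x - r * y)]

lemma abs_le_one_add (z : ℝ) : |z| ≤ 1 + z ^ 2 / 4 := by
  rw [abs_le]
  constructor <;> nlinarith [sq_nonneg (z / 2 + 1), sq_nonneg (z / 2 - 1)]

/-- The momentum constraint controls `γ'` by the energy density; the two remaining terms are
controlled by `2|xy| ≤ x² + y²`. -/
lemma abs_pth_g_le (hTm : 0 < Tm) (hlam : |lam| ≤ 1 / 2) {t : ℝ} (ht : t ∈ Ioo Tm Tp) (θ : ℝ) :
    |pth G.g t θ| ≤ (t + 1) * (G.eps t θ / √(G.α t θ)) + 1 / √(G.α t θ) := by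
  have t0 : 0 < t := hTm.trans ht.1
  have hpos := G.sys.alpha_pos t ht θ
  have hs := G.sqrt_pos ht θ
  have hg : pth G.g t θ = pth G.η t θ + 1 / 2 * (pth G.α t θ / G.α t θ)
      + lam * pth G.φ t θ - pth G.U t θ :=
    ((((G.smη.hasDerivAt_th ht θ).add
      (((G.smα.hasDerivAt_th ht θ).log hpos.ne').const_mul (1 / 2))).add
      ((G.smφ.hasDerivAt_th ht θ).const_mul lam)).sub (G.smU.hasDerivAt_th ht θ)).deriv
  have hη := G.sys.constraint_θ t ht θ
  rw [div_eq_iff t0.ne'] at hη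
  have hg' : pth G.g t θ = t * (2 * (pt G.U t θ * pth G.U t θ)
      + exp (4 * G.U t θ) / (4 * t ^ 2) * (2 * (pt G.A t θ * pth G.A t θ))
      + (1 / 4) * (2 * (pt G.φ t θ * pth G.φ t θ)
        + exp (2 * lam * G.φ t θ) * (2 * (pt G.σ t θ * pth G.σ t θ))))
      + lam * pth G.φ t θ - pth G.U t θ := by
    rw [hg, hη]; field_simp; ring
  have e2 : G.α t θ = √(G.α t θ) ^ 2 := (Real.sq_sqrt hpos.le).symm
  have e3 : G.eps t θ = calE lam G.α G.U G.A G.φ G.σ t θ := rfl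
  rw [calE] at e3
  set r := √(G.α t θ)
  rw [e2] at e3
  rw [div_eq_mul_inv, ← one_div]
  have : (t + 1) * (G.eps t θ * (1 / r)) + 1 / r = ((t + 1) * G.eps t θ + 1) / r := by ring
  rw [this, le_div_iff₀ hs, ← abs_of_pos hs, ← abs_mul]
  have hw : 0 ≤ exp (4 * G.U t θ) / (4 * t ^ 2) := by positivity
  have hw2 : 0 ≤ exp (2 * lam * G.φ t θ) := by positivity
  set w := exp (4 * G.U t θ) / (4 * t ^ 2)
  set w2 := exp (2 * lam * G.φ t θ)
  have hsq := abs_two_mul_le r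
  have hfield := abs_le_one_add (r * pth G.φ t θ)
  have hfieldU := abs_le_one_add (r * pth G.U t θ * 2)
  rw [abs_mul _ (2 : ℝ), abs_two] at hfieldU
  have hlφ : |lam * (r * pth G.φ t θ)| ≤ 1 / 2 + r ^ 2 * (pth G.φ t θ) ^ 2 / 8 := by
    rw [abs_mul]
    have := mul_le_mul_of_nonneg_right hlam (abs_nonneg (r * pth G.φ t θ))
    linarith
  replace hfieldU : |r * pth G.U t θ| ≤ 1 / 2 + r ^ 2 * (pth G.U t θ) ^ 2 / 2 := by linarith
  have hγ : |r * (2 * (pt G.U t θ * pth G.U t θ)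
      + w * (2 * (pt G.A t θ * pth G.A t θ))
      + (1 / 4) * (2 * (pt G.φ t θ * pth G.φ t θ)
        + w2 * (2 * (pt G.σ t θ * pth G.σ t θ))))| ≤ G.eps t θ := by
    have a1 := abs_le.1 (hsq (pt G.U t θ) (pth G.U t θ))
    have a2 := abs_le.1 (hsq (pt G.A t θ) (pth G.A t θ))
    have a3 := abs_le.1 (hsq (pt G.φ t θ) (pth G.φ t θ))
    have a4 := abs_le.1 (hsq (pt G.σ t θ) (pth G.σ t θ))
    have b1 := mul_le_mul_of_nonneg_left a2.1 hw
    have b2 := mul_le_mul_of_nonneg_left a2.2 hw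
    have b3 := mul_le_mul_of_nonneg_left a4.1 hw2
    have b4 := mul_le_mul_of_nonneg_left a4.2 hw2
    rw [e3, abs_le]
    constructor <;> linarith [a1.1, a1.2, a3.1, a3.2]
  have hlast : r ^ 2 * (pth G.φ t θ) ^ 2 / 8 + r ^ 2 * (pth G.U t θ) ^ 2 / 2 ≤ G.eps t θ := by
    have h2 : 0 ≤ w2 * ((pt G.σ t θ) ^ 2 + r ^ 2 * (pth G.σ t θ) ^ 2) := by positivity
    have h3 : 0 ≤ w * ((pt G.A t θ) ^ 2 + r ^ 2 * (pth G.A t θ) ^ 2) := by positivity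
    have h4 : 0 ≤ r ^ 2 * (pth G.φ t θ) ^ 2 := by positivity
    have h5 : 0 ≤ r ^ 2 * (pth G.U t θ) ^ 2 := by positivity
    rw [e3]
    linarith [sq_nonneg (pt G.U t θ), sq_nonneg (pt G.φ t θ)]
  have c1 := abs_le.1 hγ
  have c2 := abs_le.1 hlφ
  have c3 := abs_le.1 hfieldU
  have d1 := mul_le_mul_of_nonneg_left c1.1 t0.le
  have d2 := mul_le_mul_of_nonneg_left c1.2 t0.le
  rw [hg', abs_le]
  constructor <;> linarith [c2.1, c2.2, c3.1, c3.2]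

lemma alpha_antitone (θ : ℝ) (hTm : 0 < Tm) : AntitoneOn (fun t => G.α t θ) (Ioo Tm Tp) := by
  refine antitoneOn_of_deriv_nonpos (convex_Ioo _ _) (G.smα.continuousOn_t θ)
    (fun t ht => (G.smα.hasDerivAt_t (interior_subset ht)
      θ).differentiableAt.differentiableWithinAt) fun t ht => ?_
  rw [interior_Ioo] at ht
  rw [(G.smα.hasDerivAt_t ht θ).deriv, G.pt_alpha_eq ht θ]
  have h1 := (G.sys.alpha_pos t ht θ).le
  have h2 := G.V_nonneg ht θ
  have t0 : 0 ≤ t := (hTm.trans ht.1).le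
  have : 0 ≤ t * G.α t θ * G.V t θ := by positivity
  linarith

lemma g_periodic (t θ : ℝ) : G.g t (θ + 2 * π) = G.g t θ := by
  simp only [g, G.perη, G.perα, G.perφ, G.perU]

/-- The spatial oscillation of `γ + λφ - U` is bounded uniformly to the past. -/
lemma g_osc (hTm : 0 < Tm) (hlam : |lam| ≤ 1 / 2) {ti : ℝ} (hti : ti ∈ Ioo Tm Tp) :
    ∃ B : ℝ, ∀ t ∈ Ioo Tm Tp, t ≤ ti → ∀ θ₁ θ₂, G.g t θ₁ - G.g t θ₂ ≤ B := by
  have hsm : Sm Tm Tp (fun t θ => 1 / √(G.α t θ)) :=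
    contDiffOn_const.div G.sm_sqrt fun p hp => (G.sqrt_pos hp.1 p.2).ne'
  refine ⟨(ti + 1) * (ti ^ 2 * G.Efull ti / Tm ^ 2)
    + ∫ θ in Ioc (0 : ℝ) (2 * π), 1 / √(G.α ti θ), fun t ht hle θ₁ θ₂ => ?_⟩
  have t0 : 0 < t := hTm.trans ht.1
  refine (G.sm_g.sub_le_integral G.g_periodic ht θ₁ θ₂).trans ?_
  have i1 := ((G.sm_density hTm).integrable ht 0 (2 * π)).const_mul (t + 1)
  have i2 := hsm.integrable hti 0 (2 * π)
  have i3 : IntegrableOn (fun θ => |pth G.g t θ|) (Ioc 0 (2 * π)) :=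
    (G.sm_g.pth.integrable ht 0 (2 * π)).abs
  have step : ∫ θ in Ioc (0 : ℝ) (2 * π), |pth G.g t θ| ≤
      (t + 1) * G.Et t + ∫ θ in Ioc (0 : ℝ) (2 * π), 1 / √(G.α ti θ) := by
    rw [Et, ← integral_const_mul, ← integral_add i1 i2]
    refine integral_mono i3 (i1.add i2) fun θ => ?_
    refine (G.abs_pth_g_le hTm hlam ht θ).trans ?_
    have h1 : G.α ti θ ≤ G.α t θ := G.alpha_antitone θ hTm ht hti hle
    have h2 : 1 / √(G.α t θ) ≤ 1 / √(G.α ti θ) :=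
      one_div_le_one_div_of_le (G.sqrt_pos hti θ) (Real.sqrt_le_sqrt h1)
    linarith
  have hE := G.Et_le hTm ht hti hle
  have hE0 : 0 ≤ ti ^ 2 * G.Efull ti / Tm ^ 2 := by
    have := G.Efull_nonneg hti
    positivity
  have : (t + 1) * G.Et t ≤ (ti + 1) * (ti ^ 2 * G.Efull ti / Tm ^ 2) := by
    calc (t + 1) * G.Et t ≤ (t + 1) * (ti ^ 2 * G.Efull ti / Tm ^ 2) := by gcongr
      _ ≤ _ := by gcongr
  linarith

/-! ### Decay of the energy and the bound on `α` -/

lemma Et_pos (hTm : 0 < Tm) (hQ : Q ≠ 0) (htcc : TCC Q lam Tm Tp G.η G.α G.U G.φ G.σ)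
    {t : ℝ} (ht : t ∈ Ioo Tm Tp) : 0 < G.Et t := by
  rw [Et, ← intervalIntegral.integral_of_le (by positivity)]
  refine intervalIntegral.intervalIntegral_pos_of_pos
    (((G.sm_density hTm).continuous_th ht).intervalIntegrable _ _) (fun θ => ?_) (by positivity)
  have h1 := G.V_pos hQ ht θ
  have h2 := G.tcc_V htcc ht θ
  have h3 := G.K_le_eps ht θ
  exact div_pos (by linarith) (G.sqrt_pos ht θ)

/-- If `v` is a lower bound for `V(t, ·)`, then `Ẽ` decays at least at the rate
`(1/4 - λ²) t v Ẽ`. -/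
lemma deriv_Et_le (hTm : 0 < Tm) (hl2 : lam ^ 2 ≤ 1 / 4)
    (htcc : TCC Q lam Tm Tp G.η G.α G.U G.φ G.σ) {t : ℝ} (ht : t ∈ Ioo Tm Tp) {v : ℝ}
    (hv : ∀ θ, v ≤ G.V t θ) :
    deriv G.Et t ≤ -((1 / 4 - lam ^ 2) * t * v * G.Et t) := by
  obtain ⟨hi, hd⟩ := G.hasDerivAt_Et hTm ht
  have t0 : 0 < t := hTm.trans ht.1
  rw [hd.deriv, neg_le_neg_iff, Et, ← integral_const_mul]
  refine integral_mono (((G.sm_density hTm).integrable ht 0 (2 * π)).const_mul _) hi fun θ => ?_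
  have h1 := G.dissipation_ge hTm htcc ht θ
  have h2 := G.eps_nonneg ht θ
  have hs := G.sqrt_pos ht θ
  have hl : 0 ≤ 1 / 4 - lam ^ 2 := by linarith
  have h3 : (1 / 4 - lam ^ 2) * t * v * G.eps t θ
      ≤ (1 / 4 - lam ^ 2) * t * G.V t θ * G.eps t θ := by
    have := hv θ
    gcongr
  have e : (1 / 4 - lam ^ 2) * t * v * (G.eps t θ / √(G.α t θ))
      = 1 / √(G.α t θ) * ((1 / 4 - lam ^ 2) * t * v * G.eps t θ) := by ring
  simp only [e]
  have := h3.trans h1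
  gcongr

lemma differentiableAt_Et (hTm : 0 < Tm) {t : ℝ} (ht : t ∈ Ioo Tm Tp) :
    DifferentiableAt ℝ G.Et t := (G.hasDerivAt_Et hTm ht).2.differentiableAt

lemma Et_antitone (hTm : 0 < Tm) (hl2 : lam ^ 2 ≤ 1 / 4)
    (htcc : TCC Q lam Tm Tp G.η G.α G.U G.φ G.σ) : AntitoneOn G.Et (Ioo Tm Tp) := by
  refine antitoneOn_of_deriv_nonpos (convex_Ioo _ _)
    (fun t ht => (G.differentiableAt_Et hTm ht).continuousAt.continuousWithinAt)
    (fun t ht => (G.differentiableAt_Et hTm (interior_subset ht)).differentiableWithinAt)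
    fun t ht => ?_
  rw [interior_Ioo] at ht
  have := G.deriv_Et_le hTm hl2 htcc ht (v := 0) fun θ => G.V_nonneg ht θ
  simpa using this

lemma hasDerivAt_logα {t : ℝ} (ht : t ∈ Ioo Tm Tp) (θ : ℝ) :
    HasDerivAt (fun s => Real.log (G.α s θ)) (-(t * G.V t θ)) t := by
  have hpos := G.sys.alpha_pos t ht θ
  refine ((G.smα.hasDerivAt_t ht θ).log hpos.ne').congr_deriv ?_
  rw [G.pt_alpha_eq ht θ]
  field_simp

/-- `log α` grows by a uniformly bounded amount to the past: since `t V = -∂ₜ log α` and `V` has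
bounded oscillation in `θ`, the decay of `Ẽ ≥ Ẽ(tᵢ) > 0` dominates a multiple of `-∂ₜ log α`. -/
lemma logα_bound (hTm : 0 < Tm) (hQ : Q ≠ 0) (hlam : |lam| < 1 / 2)
    (htcc : TCC Q lam Tm Tp G.η G.α G.U G.φ G.σ) {ti : ℝ} (hti : ti ∈ Ioo Tm Tp) :
    ∃ L : ℝ, ∀ t ∈ Ioc Tm ti, ∀ θ, Real.log (G.α t θ) - Real.log (G.α ti θ) ≤ L := by
  have hl2 : lam ^ 2 < 1 / 4 := by
    have := abs_lt.1 hlam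
    nlinarith
  obtain ⟨B, hB⟩ := G.g_osc hTm hlam.le hti
  have e0 := G.Et_pos hTm hQ htcc hti
  set κ : ℝ := (1 / 4 - lam ^ 2) * exp (-2 * B) * G.Et ti with hκ
  have hδ : 0 < 1 / 4 - lam ^ 2 := by linarith
  have κ0 : 0 < κ := by positivity
  refine ⟨(ti ^ 2 * G.Efull ti / Tm ^ 2) / κ, fun t ht θ => ?_⟩
  have hsub : ∀ s ∈ Ioc Tm ti, s ∈ Ioo Tm Tp := fun s hs => ⟨hs.1, hs.2.trans_lt hti.2⟩
  have hdiff : ∀ s ∈ Ioc Tm ti, HasDerivAt (fun s => G.Et s - κ * Real.log (G.α s θ))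
      (deriv G.Et s - κ * -(s * G.V s θ)) s := fun s hs =>
    (G.differentiableAt_Et hTm (hsub s hs)).hasDerivAt.sub
      ((G.hasDerivAt_logα (hsub s hs) θ).const_mul κ)
  have hanti : AntitoneOn (fun s => G.Et s - κ * Real.log (G.α s θ)) (Ioc Tm ti) := by
    refine antitoneOn_of_deriv_nonpos (convex_Ioc _ _)
      (fun s hs => (hdiff s hs).continuousAt.continuousWithinAt)
      (fun s hs => (hdiff s (interior_subset hs)).differentiableAt.differentiableWithinAt)
      fun s hs => ?_
    have hs' := interior_subset hs
    have hs'' := hsub s hs'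
    rw [(hdiff s hs').deriv]
    have s0 : 0 < s := hTm.trans hs'.1
    have hv : ∀ x, exp (-2 * B) * G.V s θ ≤ G.V s x := by
      intro x
      have := hB s hs'' hs'.2 θ x
      rw [G.V_eq hs'' θ, G.V_eq hs'' x, mul_left_comm, ← exp_add]
      gcongr
      linarith
    have h1 := G.deriv_Et_le hTm hl2.le htcc hs'' hv
    have h2 : G.Et ti ≤ G.Et s := G.Et_antitone hTm hl2.le htcc hs'' hti hs'.2
    have hV := G.V_nonneg hs'' θ
    have h3 : (1 / 4 - lam ^ 2) * s * (exp (-2 * B) * G.V s θ) * G.Et ti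
      ≤ (1 / 4 - lam ^ 2) * s * (exp (-2 * B) * G.V s θ) * G.Et s := by gcongr
    have h4 : (1 / 4 - lam ^ 2) * s * (exp (-2 * B) * G.V s θ) * G.Et ti
      = κ * (s * G.V s θ) := by rw [hκ]; ring
    linarith
  have h := hanti ht ⟨hti.1, le_rfl⟩ ht.2
  have hE := G.Et_le hTm (hsub t ht) hti ht.2
  simp only at h
  rw [le_div_iff₀ κ0]
  linarith

/-- Since `s V = -∂ₛ log α`, the integral to be bounded is the growth of `log α` over `Q²`. -/
lemma integral_eq (hQ : Q ≠ 0) {ti : ℝ} (hti : ti ∈ Ioo Tm Tp) {t : ℝ}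
    (ht : t ∈ Ioc Tm ti) (θ : ℝ) :
    ∫ s in t..ti, s * exp (2 * G.g s θ)
      = (Real.log (G.α t θ) - Real.log (G.α ti θ)) / Q ^ 2 := by
  have hsub : uIcc t ti ⊆ Ioo Tm Tp := by
    rw [uIcc_of_le ht.2]
    exact fun s hs => ⟨ht.1.trans_le hs.1, hs.2.trans_lt hti.2⟩
  have hd : ∀ s ∈ uIcc t ti, HasDerivAt (fun s => -Real.log (G.α s θ) / Q ^ 2)
      (s * exp (2 * G.g s θ)) s := by
    intro s hs
    refine ((G.hasDerivAt_logα (hsub hs) θ).neg.div_const (Q ^ 2)).congr_deriv ?_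
    rw [G.V_eq (hsub hs) θ]
    field_simp
  rw [intervalIntegral.integral_eq_sub_of_hasDerivAt hd]
  · ring
  · refine ContinuousOn.intervalIntegrable ?_
    have := (G.sm_g.continuousOn_t θ).mono hsub
    fun_prop

/-- `γ - (log α) / 8` is nondecreasing in time, as `∂ₜγ = t (𝓔 - V / 4)` and `𝓔 ≥ V / 8`. -/
lemma γ_le (hTm : 0 < Tm) (htcc : TCC Q lam Tm Tp G.η G.α G.U G.φ G.σ) {t ti : ℝ}
    (ht : t ∈ Ioo Tm Tp) (hti : ti ∈ Ioo Tm Tp) (hle : t ≤ ti) (θ : ℝ) :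
    G.η t θ + 1 / 2 * Real.log (G.α t θ) ≤ G.η ti θ + 1 / 2 * Real.log (G.α ti θ)
      + (Real.log (G.α t θ) - Real.log (G.α ti θ)) / 8 := by
  have hd : ∀ s ∈ Ioo Tm Tp, HasDerivAt
      (fun s => G.η s θ + (1 / 2 - 1 / 8) * Real.log (G.α s θ))
      (pt G.η s θ + (1 / 2 - 1 / 8) * -(s * G.V s θ)) s := fun s hs =>
    (G.smη.hasDerivAt_t hs θ).add ((G.hasDerivAt_logα hs θ).const_mul _)
  have hmono : MonotoneOn (fun s => G.η s θ + (1 / 2 - 1 / 8) * Real.log (G.α s θ))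
      (Ioo Tm Tp) := by
    refine monotoneOn_of_deriv_nonneg (convex_Ioo _ _)
      (fun s hs => (hd s hs).continuousAt.continuousWithinAt)
      (fun s hs => (hd s (interior_subset hs)).differentiableAt.differentiableWithinAt)
      fun s hs => ?_
    rw [interior_Ioo] at hs
    rw [(hd s hs).deriv, G.pt_eta_eq hTm hs θ]
    have s0 : 0 < s := hTm.trans hs.1
    have h2 := (G.tcc_V htcc hs θ).trans (G.K_le_eps hs θ)
    nlinarith
  have h := hmono ht hti hle
  simp only at h
  linarith

lemma γ_bounded_slice {ti : ℝ} (hti : ti ∈ Ioo Tm Tp) :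
    ∃ M : ℝ, ∀ θ, G.η ti θ + 1 / 2 * Real.log (G.α ti θ) ≤ M := by
  obtain ⟨M, hM⟩ := isCompact_Icc.exists_bound_of_continuousOn
    (s := Icc 0 (2 * π)) (G.sm_γ.continuous_th hti).continuousOn
  refine ⟨M, fun θ => ?_⟩
  have hp : Function.Periodic (fun θ => G.η ti θ + 1 / 2 * Real.log (G.α ti θ)) (2 * π) :=
    fun θ => by simp only [G.perη, G.perα]
  obtain ⟨x, hx, hx'⟩ := hp.exists_mem_Ico₀ (by positivity) θ
  rw [hx']
  exact (le_abs_self _).trans (hM x (Ico_subset_Icc_self hx))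

end GowdySolution

theorem gamma_bounded_above_past (Q lam Tm Tp t_i : ℝ) (hQ : Q ≠ 0) (hTm : 0 < Tm) (hti : Tm < t_i)
    (hTp : t_i < Tp) (G : GowdySolution Q lam Tm Tp)
    (lamBar : ℝ) (hlam : |lam| ≤ lamBar) (hlamBar : lamBar < 1 / 2)
    (htcc : TCC Q lam Tm Tp G.η G.α G.U G.φ G.σ) :
    0 < energyEt lam G.α G.U G.A G.φ G.σ t_i
    ∧ ∃ C : ℝ,
      (∀ t ∈ Ioc Tm t_i, ∀ θ : ℝ,
        (∫ s in t..t_i,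
          s * exp (2 * ((G.η s θ + 1 / 2 * Real.log (G.α s θ))
            + lam * G.φ s θ - G.U s θ))) ≤ C)
      ∧ ∀ t ∈ Ioc Tm t_i, ∀ θ : ℝ,
          G.η t θ + 1 / 2 * Real.log (G.α t θ) ≤ C := by
  have hti' : t_i ∈ Ioo Tm Tp := ⟨hti, hTp⟩
  refine ⟨G.Et_pos hTm hQ htcc hti', ?_⟩
  obtain ⟨L, hL⟩ := G.logα_bound hTm hQ (hlam.trans_lt hlamBar) htcc hti'
  obtain ⟨M, hM⟩ := G.γ_bounded_slice hti'
  refine ⟨max (L / Q ^ 2) (M + L / 8), fun t ht θ => ?_, fun t ht θ => ?_⟩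
  · refine le_max_of_le_left ?_
    refine (G.integral_eq hQ hti' ht θ).trans_le ?_
    have := hL t ht θ
    gcongr
  · refine le_max_of_le_right ?_
    have h1 := G.γ_le hTm htcc ⟨ht.1, ht.2.trans_lt hTp⟩ hti' ht.2 θ
    have h2 := hL t ht θ
    have h3 := hM θ
    linarith

end
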